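/- Let σ be a valid layer ordering with respect to an MV assignment μ on a 1×n strip of stamps (n ≥ 2), and let μ' be the MV assignment on the 1×(n−1) strip that agrees with μ on every crease (i,i+1) with i < n−2. Then the permutation σ' of {0,…,n−2} obtained by removing face n−1 from σ (i.e., the unique permutation with σ'(i) < σ'(j) if and only if σ(i) < σ(j) for all i, j ≤ n−2) is a valid layer ordering with respect to μ'. -/

import Mathlib

/-- A crease direction: mountain or valley. -/
inductive MV : Type
  | M : MV
  | V : MV
deriving DecidableEq

/-- The value `σ(i)` of a layer ordering at face `i`, as a natural number
(`0` if `i` is out of range). -/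
def faceVal {n : ℕ} (σ : Equiv.Perm (Fin n)) (i : ℕ) : ℕ :=
  if h : i < n then (σ ⟨i, h⟩ : Fin n) else 0

/-- Condition (1): the layer ordering respects the mountain–valley assignment. -/
def MVRelations (n : ℕ) (μ : ℕ → MV) (σ : Equiv.Perm (Fin n)) : Prop :=
  ∀ i, i + 1 < n →
    if (μ i = MV.M ∧ Even i) ∨ (μ i = MV.V ∧ Odd i)
    then faceVal σ (i + 1) < faceVal σ i
    else faceVal σ i < faceVal σ (i + 1)

/-- `x` lies strictly between `lo` and `hi` (in either order). -/
def StrictlyBetween (x a b : ℕ) : Prop := min a b < x ∧ x < max a b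

/-- Condition (2): no two creases on the same side cross. -/
def NoCrossings (n : ℕ) (σ : Equiv.Perm (Fin n)) : Prop :=
  ∀ i j, i + 1 < n → j + 1 < n → i % 2 = j % 2 →
    ¬ Xor' (StrictlyBetween (faceVal σ j) (faceVal σ i) (faceVal σ (i + 1)))
           (StrictlyBetween (faceVal σ (j + 1)) (faceVal σ i) (faceVal σ (i + 1)))

/-- A valid layer ordering for the MV assignment `μ` on the `1 × n` strip. -/
def ValidLayerOrdering (n : ℕ) (μ : ℕ → MV) (σ : Equiv.Perm (Fin n)) : Prop :=
  MVRelations n μ σ ∧ NoCrossings n σ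

/-- `c(μ)`: the number of valid layer orderings for `μ` on the `1 × n` strip. -/
noncomputable def foldCount (n : ℕ) (μ : ℕ → MV) : ℕ :=
  Nat.card {σ : Equiv.Perm (Fin n) // ValidLayerOrdering n μ σ}

theorem faceVal_of_lt {n i : ℕ} (σ : Equiv.Perm (Fin n)) (hi : i < n) :
    faceVal σ i = σ ⟨i, hi⟩ :=
  dif_pos hi

theorem strictlyBetween_iff {x a b : ℕ} :
    StrictlyBetween x a b ↔ (a < x ∨ b < x) ∧ (x < a ∨ x < b) :=
  and_congr min_lt_iff lt_max_iff

/-- `IsRestriction h σ' σ` says that `σ'` is the layer ordering that `σ` induces on the first `m`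
faces: the one left after faces `m, …, n - 1` are removed. It is a relation rather than a
construction, since a permutation is determined by the relative order of its values. -/
def IsRestriction {m n : ℕ} (h : m ≤ n) (σ' : Equiv.Perm (Fin m)) (σ : Equiv.Perm (Fin n)) :
    Prop :=
  ∀ i j : Fin m, σ' i < σ' j ↔ σ (Fin.castLE h i) < σ (Fin.castLE h j)

namespace IsRestriction

variable {m n : ℕ} {h : m ≤ n} {σ' : Equiv.Perm (Fin m)} {σ : Equiv.Perm (Fin n)}

theorem faceVal_lt_iff (hr : IsRestriction h σ' σ) {i j : ℕ} (hi : i < m) (hj : j < m) :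
    faceVal σ' i < faceVal σ' j ↔ faceVal σ i < faceVal σ j := by
  rw [faceVal_of_lt σ' hi, faceVal_of_lt σ' hj, faceVal_of_lt σ (hi.trans_le h),
    faceVal_of_lt σ (hj.trans_le h)]
  exact hr ⟨i, hi⟩ ⟨j, hj⟩

theorem strictlyBetween_faceVal_iff (hr : IsRestriction h σ' σ) {k i j : ℕ}
    (hk : k < m) (hi : i < m) (hj : j < m) :
    StrictlyBetween (faceVal σ' k) (faceVal σ' i) (faceVal σ' j) ↔
      StrictlyBetween (faceVal σ k) (faceVal σ i) (faceVal σ j) := by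
  simp only [strictlyBetween_iff, hr.faceVal_lt_iff, hk, hi, hj]

theorem mvRelations (hr : IsRestriction h σ' σ) {μ μ' : ℕ → MV}
    (hμ : ∀ i, i + 1 < m → μ' i = μ i) (hσ : MVRelations n μ σ) : MVRelations m μ' σ' := by
  intro i hi
  have hi' : i < m := Nat.lt_of_succ_lt hi
  rw [hμ i hi, hr.faceVal_lt_iff hi hi', hr.faceVal_lt_iff hi' hi]
  exact hσ i (hi.trans_le h)

theorem noCrossings (hr : IsRestriction h σ' σ) (hσ : NoCrossings n σ) : NoCrossings m σ' := by
  intro i j hi hj hij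
  have hi' : i < m := Nat.lt_of_succ_lt hi
  have hj' : j < m := Nat.lt_of_succ_lt hj
  rw [hr.strictlyBetween_faceVal_iff hj' hi' hi, hr.strictlyBetween_faceVal_iff hj hi' hi]
  exact hσ i j (hi.trans_le h) (hj.trans_le h) hij

end IsRestriction

theorem stmt6_general {m n : ℕ} (h : m ≤ n) {μ μ' : ℕ → MV} (hμ : ∀ i, i + 1 < m → μ' i = μ i)
    {σ : Equiv.Perm (Fin n)} (hσ : ValidLayerOrdering n μ σ)
    {σ' : Equiv.Perm (Fin m)} (hr : IsRestriction h σ' σ) : ValidLayerOrdering m μ' σ' :=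
  ⟨hr.mvRelations hμ hσ.1, hr.noCrossings hσ.2⟩

/-- Lemma: removing the last face of a valid layer ordering on `n` faces yields a
valid layer ordering on `n − 1` faces, for any assignment agreeing on the first
`n − 2` creases. -/
theorem stmt6 (n : ℕ) (hn : 2 ≤ n) (μ μ' : ℕ → MV)
    (hμ : ∀ i, i < n - 2 → μ' i = μ i)
    (σ : Equiv.Perm (Fin n)) (hσ : ValidLayerOrdering n μ σ)
    (σ' : Equiv.Perm (Fin (n - 1)))
    (hσ' : ∀ i j : Fin (n - 1),
      σ' i < σ' j ↔ σ (Fin.castLE (Nat.sub_le n 1) i) < σ (Fin.castLE (Nat.sub_le n 1) j)) :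
    ValidLayerOrdering (n - 1) μ' σ' := by
  exact stmt6_general (Nat.sub_le n 1) (fun i hi ↦ hμ i (by omega)) hσ hσ'
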